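/- Let v be a complementary symmetric Rote sequence associated with a standard Sturmian sequence u = S(v), let x be a non-empty prefix of v and w = S(x), with return words r (more frequent) and s to w in u. If r is stable (even number of 1's) and s is unstable, and u decomposes into blocks r^k s and r^{k+1} s, then the three return words A, B, C of x in v satisfy S(A0) = r, S(B0) = s r^{k+1} s and S(C0) = s r^k s. -/

import Mathlib

/-- Words over the binary alphabet `{0,1}`, represented as `ZMod 2`. -/
abbrev Word := List (ZMod 2)

/-- The difference map `S`. -/
def Sdiff (v : Word) : Word := List.zipWith (· + ·) v v.tail

/-- The letter-exchange morphism `E`. -/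
def Ex (v : Word) : Word := v.map (· + 1)

/-- `m` is an occurrence of the word `w` in the sequence `s`. -/
def OccAt (s : ℕ → ZMod 2) (w : Word) (m : ℕ) : Prop :=
  w = List.ofFn fun i : Fin w.length => s (m + i)

/-- `w` is a factor of the sequence `s`. -/
def IsFactor (s : ℕ → ZMod 2) (w : Word) : Prop := ∃ m, OccAt s w m

/-- Factor complexity of a sequence. -/
noncomputable def Cplx (s : ℕ → ZMod 2) (n : ℕ) : ℕ :=
  {w : Word | w.length = n ∧ IsFactor s w}.ncard

/-- A Sturmian sequence: factor complexity `n + 1` for all `n`. -/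
def IsSturmian (s : ℕ → ZMod 2) : Prop := ∀ n, Cplx s n = n + 1

/-- Prepend a letter to an infinite sequence. -/
def consL (a : ZMod 2) (s : ℕ → ZMod 2) : ℕ → ZMod 2 :=
  fun n => match n with
  | 0 => a
  | k + 1 => s k

/-- A standard Sturmian sequence: both `0u` and `1u` are Sturmian. -/
def IsStandardSturmian (s : ℕ → ZMod 2) : Prop :=
  IsSturmian (consL 0 s) ∧ IsSturmian (consL 1 s)

/-- `v` is a complementary symmetric Rote sequence. -/
def IsCSRote (v : ℕ → ZMod 2) : Prop :=
  (∀ n, 1 ≤ n → Cplx v n = 2 * n) ∧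
  (∀ w : Word, IsFactor v w → IsFactor v (Ex w))

/-- The set of return words to the word `w` in the sequence `s`. -/
def ReturnWords (s : ℕ → ZMod 2) (w : Word) : Set Word :=
  {r | ∃ i j, OccAt s w i ∧ OccAt s w j ∧ i < j ∧
        (∀ t, i < t → t < j → ¬ OccAt s w t) ∧
        r = List.ofFn fun t : Fin (j - i) => s (i + t)}

/-- The sequence `s` is a concatenation of blocks from `{A, B}`. -/
def ConcatOfBlocks (s : ℕ → ZMod 2) (A B : Word) : Prop :=
  ∃ d : ℕ → Word, (∀ m, d m = A ∨ d m = B) ∧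
    ∀ n, ∃ K, (List.ofFn fun i : Fin n => s i) <+:
                (List.ofFn fun i : Fin K => d i).flatten

/-!
Since `u` is the difference of `v`, the word `x` or its complement occurs in `v` exactly where
`w = S(x)` occurs in `u`, and the value of `v` there tells which of the two it is. As the factors of
`v` are closed under complement, the return words to `x` thus correspond to the words of `u` read
between consecutive occurrences of `w` at which `v` takes the same value, whichever value it is.

The occurrences of `w` are the points where `u` is cut into `r` and `s`, and reading `r` preserves
the value of `v` while reading `s` flips it. From a cutting point followed by `r`, the value recurs
after `r`; from one followed by `s`, it recurs after `s rᵐ s`, where `rᵐ s` is the next block.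
Since `u` is not eventually periodic, both exponents `m = k` and `m = k + 1` appear.
-/

/-- The set of all occurrences of `w` in `s`. -/
def occSet (s : ℕ → ZMod 2) (w : Word) : Set ℕ := {m | OccAt s w m}

/-- `i < j` are consecutive elements of the set `O`. -/
structure IsGap (O : Set ℕ) (i j : ℕ) : Prop where
  left_mem : i ∈ O
  right_mem : j ∈ O
  lt : i < j
  notMem : ∀ t, i < t → t < j → t ∉ O

/-- The words read in `s` from an element of `O` to the next one, so that the return words to `w`
are the gap words of the set of occurrences of `w`. -/
def gapWords (s : ℕ → ZMod 2) (O : Set ℕ) : Set Word :=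
  {z | ∃ i, OccAt s z i ∧ IsGap O i (i + z.length)}

/-- `w` occurs in the word `zw` exactly twice, as a prefix and as a suffix: `zw` is a complete
return word to `w`. Unlike `ReturnWords`, this does not refer to an ambient sequence. -/
structure IsReturn (z w : Word) : Prop where
  ne_nil : z ≠ []
  isPrefix_drop_iff : ∀ t ≤ z.length, w <+: (z ++ w).drop t ↔ t = 0 ∨ t = z.length

/-- From some position on, the sequence `s` repeats with a fixed positive period. -/
def IsEventuallyPeriodic {α : Type*} (s : ℕ → α) : Prop :=
  ∃ p > 0, ∃ N, ∀ i ≥ N, s (i + p) = s i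

section Occurrences

variable {s : ℕ → ZMod 2} {x y : Word} {i : ℕ}

theorem occAt_nil (s : ℕ → ZMod 2) (i : ℕ) : OccAt s [] i := by
  simp [OccAt]

theorem occAt_cons_iff {a : ZMod 2} : OccAt s (a :: x) i ↔ a = s i ∧ OccAt s x (i + 1) := by
  simp [OccAt, List.ofFn_succ, add_assoc, add_comm 1]

theorem occAt_append_iff : OccAt s (x ++ y) i ↔ OccAt s x i ∧ OccAt s y (i + x.length) := by
  induction x generalizing i with
  | nil => simp [occAt_nil]
  | cons a x ih => simp [occAt_cons_iff, ih, and_assoc, add_assoc, add_comm 1]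

theorem occAt_replicate_flatten_iff {m : ℕ} :
    OccAt s (List.replicate m x).flatten i ↔ ∀ t < m, OccAt s x (i + t * x.length) := by
  induction m with
  | zero => simp [occAt_nil]
  | succ m ih =>
    rw [Nat.forall_lt_succ_right, ← ih, List.replicate_succ', List.flatten_append,
      occAt_append_iff]
    simp

theorem occAt_ofFn (s : ℕ → ZMod 2) (i L : ℕ) :
    OccAt s (List.ofFn fun t : Fin L => s (i + t)) i := by
  simp [OccAt]

theorem OccAt.getElem_eq (h : OccAt s x i) {t : ℕ} (ht : t < x.length) : x[t] = s (i + t) := by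
  simpa [ht] using congrArg (fun l : Word => l[t]?) h

theorem OccAt.eq_of_length_eq (hx : OccAt s x i) (hy : OccAt s y i)
    (h : x.length = y.length) : x = y :=
  hx.trans ((congrArg (fun L => List.ofFn fun t : Fin L => s (i + t)) h).trans hy.symm)

theorem OccAt.of_isPrefix (hy : OccAt s y i) (h : x <+: y) : OccAt s x i := by
  obtain ⟨q, rfl⟩ := h
  exact (occAt_append_iff.1 hy).1

theorem OccAt.isPrefix_of_length_le (hx : OccAt s x i) (hy : OccAt s y i)
    (h : x.length ≤ y.length) : x <+: y :=
  List.prefix_iff_eq_take.2 <|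
    hx.eq_of_length_eq (hy.of_isPrefix (List.take_prefix _ _)) (by simp [h])

theorem OccAt.drop (hy : OccAt s y i) {t : ℕ} (ht : t ≤ y.length) :
    OccAt s (y.drop t) (i + t) := by
  rw [← List.take_append_drop t y, occAt_append_iff, List.length_take_of_le ht] at hy
  exact hy.2

theorem OccAt.occAt_add_iff (hy : OccAt s y i) {t : ℕ} (ht : t + x.length ≤ y.length) :
    OccAt s x (i + t) ↔ x <+: y.drop t :=
  ⟨fun hx => hx.isPrefix_of_length_le (hy.drop (by omega)) (by rw [List.length_drop]; omega),
    (hy.drop (by omega)).of_isPrefix⟩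

end Occurrences

section Gaps

variable {O P : Set ℕ} {i j : ℕ}

theorem IsGap.right_unique (h : IsGap O i j) {j' : ℕ} (h' : IsGap O i j') : j = j' :=
  le_antisymm (not_lt.1 fun hlt => h.notMem j' h'.lt hlt h'.right_mem)
    (not_lt.1 fun hlt => h'.notMem j h.lt hlt h.right_mem)

theorem subset_of_forall_exists_isGap (h0 : 0 ∈ P) (hP : ∀ p ∈ P, ∃ q ∈ P, IsGap O p q) :
    O ⊆ P := by
  classical
  intro m hm
  obtain ⟨q, hqP, hgap⟩ := hP _ (Nat.findGreatest_spec (P := (· ∈ P)) (Nat.zero_le m) h0)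
  have hmq : m < q := not_le.1 fun hqm => Nat.findGreatest_is_greatest hgap.lt hqm hqP
  obtain heq | hlt := (Nat.findGreatest_le (P := (· ∈ P)) m).eq_or_lt
  · exact heq ▸ Nat.findGreatest_spec (P := (· ∈ P)) (Nat.zero_le m) h0
  · exact absurd hm (hgap.notMem m hlt hmq)

end Gaps

section ReturnWords

variable {s : ℕ → ZMod 2} {w z : Word} {i : ℕ}

theorem returnWords_eq_gapWords (s : ℕ → ZMod 2) (w : Word) :
    ReturnWords s w = gapWords s (occSet s w) := by
  ext z
  constructor
  · rintro ⟨i, j, hi, hj, hij, hno, rfl⟩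
    refine ⟨i, occAt_ofFn s i _, ?_⟩
    rw [List.length_ofFn, Nat.add_sub_cancel' hij.le]
    exact ⟨hi, hj, hij, hno⟩
  · rintro ⟨i, hz, hi, hj, hij, hno⟩
    refine ⟨i, i + z.length, hi, hj, hij, hno, ?_⟩
    rwa [Nat.add_sub_cancel_left]

theorem occAt_and_isGap_iff :
    OccAt s z i ∧ IsGap (occSet s w) i (i + z.length) ↔ IsReturn z w ∧ OccAt s (z ++ w) i := by
  have hocc (hzw : OccAt s (z ++ w) i) {t : ℕ} (ht : t ≤ z.length) :
      OccAt s w (i + t) ↔ w <+: (z ++ w).drop t :=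
    hzw.occAt_add_iff (by simpa using ht)
  constructor
  · rintro ⟨hz, hgap⟩
    have hzw := occAt_append_iff.2 ⟨hz, hgap.right_mem⟩
    refine ⟨⟨List.ne_nil_of_length_pos (by simpa using hgap.lt), fun t ht => ?_⟩, hzw⟩
    rw [← hocc hzw ht]
    refine ⟨fun hw => ?_, ?_⟩
    · by_contra! hne
      exact hgap.notMem (i + t) (by omega) (by omega) hw
    · rintro (rfl | rfl)
      exacts [hgap.left_mem, hgap.right_mem]
  · rintro ⟨hret, hzw⟩
    refine ⟨(occAt_append_iff.1 hzw).1, ?_, (occAt_append_iff.1 hzw).2, ?_, fun m him hmj hw => ?_⟩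
    · exact (hocc hzw (Nat.zero_le _)).2 ((hret.isPrefix_drop_iff 0 (Nat.zero_le _)).2 (.inl rfl))
    · simpa using List.length_pos_of_ne_nil hret.ne_nil
    · obtain ⟨t, rfl⟩ := Nat.exists_eq_add_of_lt him
      have ht : t + 1 ≤ z.length := by omega
      have := (hret.isPrefix_drop_iff (t + 1) ht).1 ((hocc hzw ht).1 hw)
      omega

theorem mem_returnWords_iff : z ∈ ReturnWords s w ↔ IsReturn z w ∧ IsFactor s (z ++ w) := by
  rw [returnWords_eq_gapWords]
  exact (exists_congr fun _ => occAt_and_isGap_iff).trans exists_and_left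

theorem ne_nil_of_mem_returnWords (hz : z ∈ ReturnWords s w) : z ≠ [] :=
  (mem_returnWords_iff.1 hz).1.ne_nil

theorem length_pos_of_mem_returnWords (hz : z ∈ ReturnWords s w) : 0 < z.length :=
  List.length_pos_of_ne_nil (ne_nil_of_mem_returnWords hz)

theorem isGap_of_mem_returnWords (hz : z ∈ ReturnWords s w) (hzi : OccAt s z i)
    (hw : OccAt s w (i + z.length)) : IsGap (occSet s w) i (i + z.length) :=
  (occAt_and_isGap_iff.2 ⟨(mem_returnWords_iff.1 hz).1, occAt_append_iff.2 ⟨hzi, hw⟩⟩).2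

/-- The letters of `w` at a cutting point are obtained one after the other, since `w` is a prefix
of `zw` for every return word `z`. -/
theorem subset_occSet_of_cut {P : Set ℕ}
    (hP : ∀ p ∈ P, ∃ z ∈ ReturnWords s w, OccAt s z p ∧ p + z.length ∈ P) : P ⊆ occSet s w := by
  have htake (n : ℕ) : ∀ p ∈ P, OccAt s (w.take n) p := by
    induction n with
    | zero => simp [occAt_nil]
    | succ n ih =>
      intro p hp
      obtain ⟨z, hz, hzp, hnext⟩ := hP p hp
      have hw : w <+: z ++ w :=
        ((mem_returnWords_iff.1 hz).1.isPrefix_drop_iff 0 (Nat.zero_le _)).2 (.inl rfl)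
      refine (occAt_append_iff.2 ⟨hzp, ih _ hnext⟩).of_isPrefix <|
        List.prefix_of_prefix_length_le ((List.take_prefix _ _).trans hw)
          ((List.prefix_append_right_inj z).2 (List.take_prefix n w)) ?_
      have := length_pos_of_mem_returnWords hz
      simp only [List.length_take, List.length_append]
      omega
  intro p hp
  simpa [occSet] using htake w.length p hp

theorem occSet_eq_of_cut {P : Set ℕ} (h0 : 0 ∈ P)
    (hP : ∀ p ∈ P, ∃ z ∈ ReturnWords s w, OccAt s z p ∧ p + z.length ∈ P) : occSet s w = P := by
  have hsub := subset_occSet_of_cut hP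
  refine (subset_of_forall_exists_isGap h0 fun p hp => ?_).antisymm hsub
  obtain ⟨z, hz, hzp, hnext⟩ := hP p hp
  exact ⟨_, hnext, isGap_of_mem_returnWords hz hzp (hsub hnext)⟩

end ReturnWords

section Complement

theorem Ex_Ex (x : Word) : Ex (Ex x) = x := by
  simp [Ex, Function.comp_def, add_assoc, CharTwo.add_self_eq_zero]

theorem Ex_append (x y : Word) : Ex (x ++ y) = Ex x ++ Ex y :=
  List.map_append

theorem IsReturn.complement {z w : Word} (h : IsReturn z w) : IsReturn (Ex z) (Ex w) := by
  refine ⟨by simpa [Ex] using h.ne_nil, fun t ht => ?_⟩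
  rw [Ex, List.length_map] at ht
  rw [← Ex_append, Ex, Ex, ← List.map_drop,
    List.prefix_map_iff_of_injective (add_left_injective (1 : ZMod 2)), h.isPrefix_drop_iff t ht,
    Ex, List.length_map]

theorem Ex_mem_returnWords_Ex {v : ℕ → ZMod 2} (hv : ∀ x, IsFactor v x → IsFactor v (Ex x))
    {z w : Word} (hz : z ∈ ReturnWords v w) : Ex z ∈ ReturnWords v (Ex w) := by
  obtain ⟨hret, hfac⟩ := mem_returnWords_iff.1 hz
  exact mem_returnWords_iff.2 ⟨hret.complement, Ex_append z w ▸ hv _ hfac⟩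

theorem Sdiff_Ex (x : Word) : Sdiff (Ex x) = Sdiff x := by
  simp only [Sdiff, Ex, ← List.map_tail, List.zipWith_map]
  congr 1
  ext a b
  linear_combination CharTwo.two_eq_zero (R := ZMod 2)

end Complement

section DifferenceMap

theorem length_Sdiff (x : Word) : (Sdiff x).length = x.length - 1 := by
  simp [Sdiff]

theorem Sdiff_append_singleton_injective (a : ZMod 2) :
    Function.Injective fun x : Word => Sdiff (x ++ [a]) := by
  have hcons (b : ZMod 2) (x : Word) :
      Sdiff (b :: x ++ [a]) = (b + (x ++ [a]).head (by simp)) :: Sdiff (x ++ [a]) := by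
    cases x <;> rfl
  intro x y h
  have hlen : x.length = y.length := by simpa [length_Sdiff] using congrArg List.length h
  induction x generalizing y with
  | nil => exact (List.length_eq_zero_iff.1 hlen.symm).symm
  | cons b x ih =>
    obtain ⟨c, y, rfl⟩ := List.exists_cons_of_length_eq_add_one hlen.symm
    simp only [hcons, List.cons.injEq] at h
    obtain rfl := ih h.2 (by simpa using hlen)
    rw [add_right_cancel h.1]

variable {u v : ℕ → ZMod 2} {a : ZMod 2} {y z : Word}

theorem occAt_cons_iff_Sdiff (hu : ∀ i, u i = v i + v (i + 1)) {m : ℕ} :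
    OccAt v (a :: y) m ↔ OccAt u (Sdiff (a :: y)) m ∧ v m = a := by
  induction y generalizing a m with
  | nil => simp [occAt_cons_iff, occAt_nil, Sdiff, eq_comm]
  | cons b y ih =>
    have hS : Sdiff (a :: b :: y) = (a + b) :: Sdiff (b :: y) := rfl
    rw [occAt_cons_iff, ih, hS, occAt_cons_iff, hu]
    constructor
    · rintro ⟨rfl, h, rfl⟩
      exact ⟨⟨rfl, h⟩, rfl⟩
    · rintro ⟨⟨h, hy⟩, rfl⟩
      exact ⟨rfl, hy, (add_left_cancel h).symm⟩

theorem occSet_cons_eq (hu : ∀ i, u i = v i + v (i + 1)) (a : ZMod 2) (y : Word) :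
    occSet v (a :: y) = occSet u (Sdiff (a :: y)) ∩ v ⁻¹' {a} :=
  Set.ext fun _ => occAt_cons_iff_Sdiff hu

theorem OccAt.Sdiff (hu : ∀ i, u i = v i + v (i + 1)) {i : ℕ} (h : OccAt v z i) :
    OccAt u (Sdiff z) i := by
  cases z with
  | nil => exact occAt_nil u i
  | cons b z => exact ((occAt_cons_iff_Sdiff hu).1 h).1

theorem image_gapWords_Sdiff (hu : ∀ i, u i = v i + v (i + 1)) {O : Set ℕ}
    (hO : ∀ m ∈ O, v m = a) : (fun R => Sdiff (R ++ [a])) '' gapWords v O = gapWords u O := by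
  have hlen (R : Word) : (Sdiff (R ++ [a])).length = R.length := by simp [length_Sdiff]
  have hocc {R : Word} {i : ℕ} (hR : OccAt v R i) (hgap : IsGap O i (i + R.length)) :
      OccAt u (Sdiff (R ++ [a])) i :=
    (occAt_append_iff.2 ⟨hR, occAt_cons_iff.2
      ⟨(hO _ hgap.right_mem).symm, occAt_nil v _⟩⟩).Sdiff hu
  refine Set.Subset.antisymm ?_ fun z ⟨i, hz, hgap⟩ => ?_
  · rintro _ ⟨R, ⟨i, hR, hgap⟩, rfl⟩
    exact ⟨i, hocc hR hgap, by rwa [hlen]⟩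
  · have hR := occAt_ofFn v i z.length
    have hgap' : IsGap O i (i + (List.ofFn fun t : Fin z.length => v (i + t)).length) := by
      rwa [List.length_ofFn]
    refine ⟨_, ⟨i, hR, hgap'⟩, (hocc hR hgap').eq_of_length_eq hz ?_⟩
    rw [hlen, List.length_ofFn]

theorem image_returnWords_Sdiff (hu : ∀ i, u i = v i + v (i + 1)) (a : ZMod 2) (y : Word) :
    (fun R => Sdiff (R ++ [a])) '' ReturnWords v (a :: y) =
      gapWords u (occSet u (Sdiff (a :: y)) ∩ v ⁻¹' {a}) := by
  rw [returnWords_eq_gapWords, occSet_cons_eq hu]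
  exact image_gapWords_Sdiff hu fun m hm => hm.2

/-- Complementation exchanges the levels `v = a` and `v = a + 1`, so the return words to a single
word see the gaps of both levels. -/
theorem image_returnWords_Sdiff_eq_iUnion (hu : ∀ i, u i = v i + v (i + 1))
    (hv : ∀ x, IsFactor v x → IsFactor v (Ex x)) (a : ZMod 2) (y : Word) :
    (fun R => Sdiff (R ++ [a])) '' ReturnWords v (a :: y) =
      ⋃ c, gapWords u (occSet u (Sdiff (a :: y)) ∩ v ⁻¹' {c}) := by
  refine Set.Subset.antisymm ?_ (Set.iUnion_subset fun c => ?_)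
  · rw [image_returnWords_Sdiff hu]
    exact Set.subset_iUnion_of_subset a subset_rfl
  · obtain rfl | rfl : c = a ∨ c = a + 1 := by decide +revert
    · rw [image_returnWords_Sdiff hu]
    · rw [← Sdiff_Ex (a :: y)]
      change gapWords u (occSet u (Sdiff ((a + 1) :: Ex y)) ∩ v ⁻¹' {a + 1}) ⊆ _
      rw [← image_returnWords_Sdiff hu]
      rintro _ ⟨R, hR, rfl⟩
      refine ⟨Ex R, ?_, ?_⟩
      · simpa only [Ex_Ex] using Ex_mem_returnWords_Ex hv (w := Ex (a :: y)) hR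
      · change Sdiff (Ex R ++ [a]) = Sdiff (R ++ [a + 1])
        rw [← Sdiff_Ex (R ++ [a + 1]), Ex_append]
        simp [Ex, add_assoc, CharTwo.add_self_eq_zero]

theorem apply_add_length (hu : ∀ i, u i = v i + v (i + 1)) {i : ℕ} (hz : OccAt u z i) :
    v (i + z.length) = v i + (z.count 1 : ℕ) := by
  induction z generalizing i with
  | nil => simp
  | cons b z ih =>
    obtain ⟨rfl, hz'⟩ := occAt_cons_iff.1 hz
    have hb : ((if (u i == 1) = true then 1 else 0 : ℕ) : ZMod 2) = u i := by
      generalize u i = b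
      decide +revert
    rw [List.length_cons, ← add_assoc, add_right_comm, ih hz', List.count_cons,
      Nat.cast_add, hb, hu]
    linear_combination -v i * CharTwo.two_eq_zero (R := ZMod 2)

theorem apply_add_length_of_even (hu : ∀ i, u i = v i + v (i + 1)) {i : ℕ} (hz : OccAt u z i)
    (h : Even (z.count 1)) : v (i + z.length) = v i := by
  rw [apply_add_length hu hz, ZMod.natCast_eq_zero_iff_even.2 h, add_zero]

theorem apply_add_length_of_not_even (hu : ∀ i, u i = v i + v (i + 1)) {i : ℕ}
    (hz : OccAt u z i) (h : ¬ Even (z.count 1)) : v (i + z.length) = v i + 1 := by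
  rw [apply_add_length hu hz, ZMod.natCast_eq_one_iff_odd.2 (Nat.not_even_iff_odd.1 h)]

end DifferenceMap

section Periodicity

theorem Cplx_le_of_period {s : ℕ → ZMod 2} {N p : ℕ} (hp : 0 < p)
    (h : ∀ i ≥ N, s (i + p) = s i) (L : ℕ) : Cplx s L ≤ N + p := by
  have hshift (m : ℕ) : ∃ m' < N + p, ∀ t, s (m + t) = s (m' + t) := by
    induction m using Nat.strong_induction_on with
    | _ m ih =>
      obtain hm | hm := lt_or_ge m (N + p)
      · exact ⟨m, hm, fun _ => rfl⟩
      · obtain ⟨m', hm', heq⟩ := ih (m - p) (by omega)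
        refine ⟨m', hm', fun t => ?_⟩
        rw [← heq, ← h (m - p + t) (by omega)]
        congr 1
        omega
  have hsub : {w : Word | w.length = L ∧ IsFactor s w} ⊆
      (Finset.range (N + p)).image fun m => List.ofFn fun t : Fin L => s (m + t) := by
    rintro w ⟨rfl, m, hm⟩
    obtain ⟨m', hm', heq⟩ := hshift m
    refine Finset.mem_coe.2 (Finset.mem_image.2 ⟨m', Finset.mem_range.2 hm', ?_⟩)
    simp only [← heq]
    exact hm.symm
  calc Cplx s L ≤ _ := Set.ncard_le_ncard hsub (Finset.finite_toSet _)
    _ ≤ (Finset.range (N + p)).card := by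
      rw [Set.ncard_coe_finset]
      exact Finset.card_image_le
    _ = N + p := Finset.card_range _

theorem IsSturmian.not_isEventuallyPeriodic {s : ℕ → ZMod 2} (hs : IsSturmian s) :
    ¬ IsEventuallyPeriodic s := by
  rintro ⟨p, hp, N, h⟩
  have := Cplx_le_of_period hp h (N + p)
  rw [hs] at this
  omega

theorem IsEventuallyPeriodic.consL {s : ℕ → ZMod 2} (hs : IsEventuallyPeriodic s) (a : ZMod 2) :
    IsEventuallyPeriodic (consL a s) := by
  obtain ⟨p, hp, N, h⟩ := hs
  refine ⟨p, hp, N + 1, fun i hi => ?_⟩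
  obtain ⟨i, rfl⟩ := Nat.exists_eq_add_of_le' (Nat.one_le_of_lt hi)
  rw [add_right_comm]
  exact h i (by omega)

theorem IsStandardSturmian.not_isEventuallyPeriodic {s : ℕ → ZMod 2} (hs : IsStandardSturmian s) :
    ¬ IsEventuallyPeriodic s :=
  fun h => hs.1.not_isEventuallyPeriodic (h.consL 0)

theorem isEventuallyPeriodic_of_occAt {s : ℕ → ZMod 2} {z : Word} {N : ℕ} (hz : z ≠ [])
    (h : ∀ q, OccAt s z (N + q * z.length)) : IsEventuallyPeriodic s := by
  have hpos : 0 < z.length := List.length_pos_of_ne_nil hz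
  have hletter (q t : ℕ) (ht : t < z.length) : s (N + q * z.length + t) = z[t] :=
    ((h q).getElem_eq ht).symm
  refine ⟨z.length, hpos, N, fun i hi => ?_⟩
  obtain ⟨m, rfl⟩ := Nat.exists_eq_add_of_le hi
  have ht := Nat.mod_lt m hpos
  have hm : N + m = N + m / z.length * z.length + m % z.length := by
    rw [add_assoc, Nat.div_add_mod']
  rw [hm, hletter _ _ ht, ← hletter (m / z.length + 1) _ ht]
  congr 1
  ring

end Periodicity

section Cuts

/-- The position reached after `b` blocks and `t` further steps of length `ρ`, where the block `i`
consists of `e i` steps of length `ρ` and one step of length `σ`. -/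
def cut (ρ σ : ℕ) (e : ℕ → ℕ) (b t : ℕ) : ℕ :=
  (∑ i ∈ Finset.range b, (e i * ρ + σ)) + t * ρ

/-- The positions `cut ρ σ e b t` inside the blocks `b` of parity `c`. -/
def levelCuts (ρ σ : ℕ) (e : ℕ → ℕ) (c : ZMod 2) : Set ℕ :=
  {m | ∃ b t, t ≤ e b ∧ (b : ZMod 2) = c ∧ m = cut ρ σ e b t}

variable {ρ σ : ℕ} {e : ℕ → ℕ} {b c t : ℕ}

theorem cut_zero_zero (ρ σ : ℕ) (e : ℕ → ℕ) : cut ρ σ e 0 0 = 0 := by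
  simp [cut]

theorem cut_add_one_right (ρ σ : ℕ) (e : ℕ → ℕ) (b t : ℕ) :
    cut ρ σ e b (t + 1) = cut ρ σ e b t + ρ := by
  simp only [cut]
  ring

theorem cut_add_one_zero (ρ σ : ℕ) (e : ℕ → ℕ) (b : ℕ) :
    cut ρ σ e (b + 1) 0 = cut ρ σ e b (e b) + σ := by
  simp only [cut, Finset.sum_range_succ]
  ring

theorem cut_add_two_zero (ρ σ : ℕ) (e : ℕ → ℕ) (b : ℕ) :
    cut ρ σ e (b + 2) 0 = cut ρ σ e b (e b) + (σ + e (b + 1) * ρ + σ) := by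
  simp only [cut, Finset.sum_range_succ]
  ring

theorem cut_monotone (ρ σ : ℕ) (e : ℕ → ℕ) (b : ℕ) : Monotone (cut ρ σ e b) :=
  fun _ _ h => Nat.add_le_add_left (Nat.mul_le_mul_right ρ h) _

theorem cut_lt_cut_of_lt (hσ : 0 < σ) (hbc : b < c) (ht : t ≤ e b) (t' : ℕ) :
    cut ρ σ e b t < cut ρ σ e c t' :=
  calc cut ρ σ e b t ≤ cut ρ σ e b (e b) := cut_monotone ρ σ e b ht
    _ < cut ρ σ e (b + 1) 0 := by rw [cut_add_one_zero]; omega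
    _ ≤ cut ρ σ e c 0 := by
      simp only [cut, zero_mul, add_zero]
      exact Finset.sum_le_sum_of_subset (Finset.range_subset_range.2 hbc)
    _ ≤ cut ρ σ e c t' := cut_monotone ρ σ e c (Nat.zero_le t')

theorem isGap_levelCuts_of_lt (hρ : 0 < ρ) (hσ : 0 < σ) (ht : t < e b) :
    IsGap (levelCuts ρ σ e b) (cut ρ σ e b t) (cut ρ σ e b t + ρ) := by
  rw [← cut_add_one_right]
  refine ⟨⟨b, t, ht.le, rfl, rfl⟩, ⟨b, t + 1, ht, rfl, rfl⟩, ?_, ?_⟩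
  · rw [cut_add_one_right]
    omega
  · rintro _ h1 h2 ⟨c, t', ht', -, rfl⟩
    obtain hcb | rfl | hbc := lt_trichotomy c b
    · exact h1.not_gt (cut_lt_cut_of_lt hσ hcb ht' t)
    · have := (cut_monotone ρ σ e c).reflect_lt h1
      have := (cut_monotone ρ σ e c).reflect_lt h2
      omega
    · exact h2.not_gt (cut_lt_cut_of_lt hσ hbc ht t')

theorem isGap_levelCuts_last (hσ : 0 < σ) (b : ℕ) :
    IsGap (levelCuts ρ σ e b) (cut ρ σ e b (e b))
      (cut ρ σ e b (e b) + (σ + e (b + 1) * ρ + σ)) := by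
  rw [← cut_add_two_zero]
  have hparity : ((b + 2 : ℕ) : ZMod 2) = b :=
    (ZMod.natCast_eq_natCast_iff' _ _ _).2 (Nat.add_mod_right b 2)
  refine ⟨⟨b, e b, le_rfl, rfl, rfl⟩, ⟨b + 2, 0, Nat.zero_le _, hparity, rfl⟩,
    cut_lt_cut_of_lt hσ (by omega) le_rfl 0, ?_⟩
  rintro _ h1 h2 ⟨c, t, ht, hc, rfl⟩
  have hbc : b ≤ c := not_lt.1 fun hcb => h1.not_gt (cut_lt_cut_of_lt hσ hcb ht _)
  have hcb : c < b + 2 := not_le.1 fun hbc => by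
    obtain rfl | hbc := hbc.eq_or_lt
    · exact h2.not_ge (cut_monotone ρ σ e _ (Nat.zero_le t))
    · exact h2.not_gt (cut_lt_cut_of_lt hσ hbc (Nat.zero_le _) t)
  obtain rfl | rfl : c = b ∨ c = b + 1 := by omega
  · exact h1.not_ge (cut_monotone ρ σ e c ht)
  · simp at hc

theorem isGap_levelCuts_iff (hρ : 0 < ρ) (hσ : 0 < σ) {c : ZMod 2} {i j : ℕ} :
    IsGap (levelCuts ρ σ e c) i j ↔ ∃ b : ℕ, (b : ZMod 2) = c ∧
      ((∃ t < e b, i = cut ρ σ e b t ∧ j = i + ρ) ∨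
        i = cut ρ σ e b (e b) ∧ j = i + (σ + e (b + 1) * ρ + σ)) := by
  constructor
  · intro h
    obtain ⟨b, t, ht, rfl, rfl⟩ := h.left_mem
    refine ⟨b, rfl, ?_⟩
    obtain ht | rfl := ht.lt_or_eq
    · exact .inl ⟨t, ht, rfl, h.right_unique (isGap_levelCuts_of_lt hρ hσ ht)⟩
    · exact .inr ⟨rfl, h.right_unique (isGap_levelCuts_last hσ b)⟩
  · rintro ⟨b, rfl, ⟨t, ht, rfl, rfl⟩ | ⟨rfl, rfl⟩⟩
    exacts [isGap_levelCuts_of_lt hρ hσ ht, isGap_levelCuts_last hσ b]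

end Cuts

section Blocks

/-- The sequence `u` is the concatenation of the blocks `rᵐs` with `m = e 0, e 1, e 2, …`. -/
structure IsBlockFactorization (u : ℕ → ZMod 2) (r s : Word) (e : ℕ → ℕ) : Prop where
  occAt_left : ∀ b, ∀ t < e b, OccAt u r (cut r.length s.length e b t)
  occAt_right : ∀ b, OccAt u s (cut r.length s.length e b (e b))

/-- The word `s rᵐ s`. -/
abbrev sandwich (r s : Word) (m : ℕ) : Word := s ++ (List.replicate m r).flatten ++ s

theorem length_sandwich (r s : Word) (m : ℕ) :
    (sandwich r s m).length = s.length + m * r.length + s.length := by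
  simp [add_assoc]

theorem sandwich_injective {r : Word} (hr : r ≠ []) (s : Word) :
    Function.Injective (sandwich r s) := by
  intro m m' h
  have hlen := congrArg List.length h
  rw [length_sandwich, length_sandwich, add_left_inj, add_right_inj] at hlen
  exact Nat.eq_of_mul_eq_mul_right (List.length_pos_of_ne_nil hr) hlen

theorem occAt_flatten_ofFn {u : ℕ → ZMod 2} {d : ℕ → Word}
    (h : ∀ n, ∃ K, (List.ofFn fun i : Fin n => u i) <+: (List.ofFn fun i : Fin K => d i).flatten)
    (K : ℕ) : OccAt u (List.ofFn fun i : Fin K => d i).flatten 0 := by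
  set D : ℕ → Word := fun K => (List.ofFn fun i : Fin K => d i).flatten
  have hmono (b c : ℕ) : D b <+: D (b + c) := by
    simp only [D, List.ofFn_add, List.flatten_append]
    exact List.prefix_append _ _
  obtain ⟨M, hM⟩ := h (D K).length
  have hocc := occAt_ofFn u 0 (D K).length
  simp only [zero_add] at hocc
  exact hocc.of_isPrefix <| List.prefix_of_prefix_length_le (hmono K M)
    (hM.trans (Nat.add_comm K M ▸ hmono M K)) List.length_ofFn.ge

theorem ConcatOfBlocks.exists_isBlockFactorization {u : ℕ → ZMod 2} {r s : Word} {k l : ℕ}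
    (h : ConcatOfBlocks u ((List.replicate k r).flatten ++ s) ((List.replicate l r).flatten ++ s)) :
    ∃ e : ℕ → ℕ, (∀ b, e b = k ∨ e b = l) ∧ IsBlockFactorization u r s e := by
  obtain ⟨d, hd, hprefix⟩ := h
  have hexp (b : ℕ) : ∃ m, (m = k ∨ m = l) ∧ d b = (List.replicate m r).flatten ++ s :=
    (hd b).elim (fun h => ⟨k, .inl rfl, h⟩) fun h => ⟨l, .inr rfl, h⟩
  choose e he hde using hexp
  have hlen (b : ℕ) :
      (List.ofFn fun i : Fin b => d i).flatten.length = cut r.length s.length e b 0 := by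
    simp [cut, hde, List.length_flatten, List.map_ofFn, List.sum_ofFn, Function.comp_def,
      Finset.sum_range]
  have hblock (b : ℕ) : OccAt u (d b) (cut r.length s.length e b 0) := by
    have := occAt_flatten_ofFn hprefix (b + 1)
    rw [List.ofFn_succ_last, List.flatten_append, occAt_append_iff] at this
    simpa [← hlen] using this.2
  simp only [hde, occAt_append_iff, occAt_replicate_flatten_iff] at hblock
  refine ⟨e, he, fun b t ht => ?_, fun b => ?_⟩
  · simpa [cut] using (hblock b).1 t ht
  · simpa [cut] using (hblock b).2

namespace IsBlockFactorization

variable {u v : ℕ → ZMod 2} {r s w : Word} {e : ℕ → ℕ}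

theorem occSet_eq (h : IsBlockFactorization u r s e) (hr : r ∈ ReturnWords u w)
    (hs : s ∈ ReturnWords u w) :
    occSet u w = {m | ∃ b t, t ≤ e b ∧ m = cut r.length s.length e b t} := by
  refine occSet_eq_of_cut ⟨0, 0, Nat.zero_le _, (cut_zero_zero _ _ _).symm⟩ ?_
  rintro _ ⟨b, t, ht, rfl⟩
  obtain ht | rfl := ht.lt_or_eq
  · exact ⟨r, hr, h.occAt_left b t ht, b, t + 1, ht, (cut_add_one_right _ _ _ _ _).symm⟩
  · exact ⟨s, hs, h.occAt_right b, b + 1, 0, Nat.zero_le _, (cut_add_one_zero _ _ _ _).symm⟩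

theorem apply_cut (h : IsBlockFactorization u r s e) (hu : ∀ i, u i = v i + v (i + 1))
    (hr : Even (r.count 1)) (hs : ¬ Even (s.count 1)) {b t : ℕ} (ht : t ≤ e b) :
    v (cut r.length s.length e b t) = v 0 + b := by
  induction b generalizing t with
  | zero =>
    induction t with
    | zero => simp [cut_zero_zero]
    | succ t ih =>
      rw [cut_add_one_right, apply_add_length_of_even hu (h.occAt_left 0 t ht) hr, ih (by omega)]
  | succ b ihb =>
    induction t with
    | zero =>
      rw [cut_add_one_zero, apply_add_length_of_not_even hu (h.occAt_right b) hs, ihb le_rfl,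
        Nat.cast_add, Nat.cast_one, add_assoc]
    | succ t ih =>
      rw [cut_add_one_right, apply_add_length_of_even hu (h.occAt_left _ t ht) hr, ih (by omega)]

theorem occSet_inter_eq_levelCuts (h : IsBlockFactorization u r s e)
    (hu : ∀ i, u i = v i + v (i + 1)) (hr : r ∈ ReturnWords u w) (hs : s ∈ ReturnWords u w)
    (hreven : Even (r.count 1)) (hsodd : ¬ Even (s.count 1)) (c : ZMod 2) :
    occSet u w ∩ v ⁻¹' {v 0 + c} = levelCuts r.length s.length e c := by
  rw [h.occSet_eq hr hs]
  ext m
  constructor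
  · rintro ⟨⟨b, t, ht, rfl⟩, hc⟩
    exact ⟨b, t, ht, add_left_cancel ((h.apply_cut hu hreven hsodd ht).symm.trans hc), rfl⟩
  · rintro ⟨b, t, ht, rfl, rfl⟩
    exact ⟨⟨b, t, ht, rfl⟩, h.apply_cut hu hreven hsodd ht⟩

theorem occAt_sandwich (h : IsBlockFactorization u r s e) (b : ℕ) :
    OccAt u (sandwich r s (e (b + 1))) (cut r.length s.length e b (e b)) := by
  rw [sandwich, occAt_append_iff, occAt_append_iff, List.length_append, ← add_assoc,
    ← cut_add_one_zero, occAt_replicate_flatten_iff]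
  refine ⟨⟨h.occAt_right b, fun t ht => ?_⟩, ?_⟩
  · simpa [cut] using h.occAt_left (b + 1) t ht
  · simpa [cut] using h.occAt_right (b + 1)

theorem mem_gapWords_levelCuts_iff (h : IsBlockFactorization u r s e) (hr : r ≠ [])
    (hs : s ≠ []) {c : ZMod 2} {z : Word} :
    z ∈ gapWords u (levelCuts r.length s.length e c) ↔ ∃ b : ℕ, (b : ZMod 2) = c ∧
      (z = r ∧ 0 < e b ∨ z = sandwich r s (e (b + 1))) := by
  have hgap {i j : ℕ} := isGap_levelCuts_iff (e := e) (c := c) (i := i) (j := j)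
    (List.length_pos_of_ne_nil hr) (List.length_pos_of_ne_nil hs)
  constructor
  · rintro ⟨i, hz, hi⟩
    obtain ⟨b, hb, ⟨t, ht, rfl, hj⟩ | ⟨rfl, hj⟩⟩ := hgap.1 hi
    · exact ⟨b, hb, .inl ⟨hz.eq_of_length_eq (h.occAt_left b t ht) (add_left_cancel hj),
        Nat.zero_lt_of_lt ht⟩⟩
    · refine ⟨b, hb, .inr (hz.eq_of_length_eq (h.occAt_sandwich b) ?_)⟩
      rw [length_sandwich, add_left_cancel hj]
  · rintro ⟨b, hb, ⟨rfl, hpos⟩ | rfl⟩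
    · exact ⟨_, h.occAt_left b 0 hpos, hgap.2 ⟨b, hb, .inl ⟨0, hpos, rfl, rfl⟩⟩⟩
    · exact ⟨_, h.occAt_sandwich b, hgap.2 ⟨b, hb, .inr ⟨rfl, by rw [length_sandwich]⟩⟩⟩

theorem exists_apply_add_one_ne (h : IsBlockFactorization u r s e) (hs : s ≠ [])
    (hu : ¬ IsEventuallyPeriodic u) (m : ℕ) : ∃ b, e (b + 1) ≠ m := by
  by_contra! hconst
  set z : Word := (List.replicate m r).flatten ++ s
  have hcut (q : ℕ) : cut r.length s.length e (q + 1) 0 =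
      cut r.length s.length e 1 0 + q * z.length := by
    induction q with
    | zero => simp
    | succ q ih =>
      rw [cut_add_one_zero, hconst]
      simp only [cut, z] at ih ⊢
      simp only [List.length_append, List.length_flatten, List.map_replicate, List.sum_replicate,
        smul_eq_mul] at ih ⊢
      linarith
  refine hu (isEventuallyPeriodic_of_occAt (z := z) (by simp [z, hs])
    (N := cut r.length s.length e 1 0) fun q => ?_)
  rw [← hcut, occAt_append_iff, occAt_replicate_flatten_iff]
  refine ⟨fun t ht => ?_, ?_⟩
  · simpa [cut] using h.occAt_left (q + 1) t (by rwa [hconst])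
  · simpa [cut, hconst] using h.occAt_right (q + 1)

theorem exists_apply_add_one_eq (h : IsBlockFactorization u r s e) (hs : s ≠ [])
    (hu : ¬ IsEventuallyPeriodic u) {k l : ℕ} (he : ∀ b, e b = k ∨ e b = l) :
    (∃ b, e (b + 1) = k) ∧ ∃ b, e (b + 1) = l :=
  ⟨(h.exists_apply_add_one_ne hs hu l).imp fun _ => (he _).resolve_right,
    (h.exists_apply_add_one_ne hs hu k).imp fun _ => (he _).resolve_left⟩

/-- Were `r` equal to `s rᵐ s`, both `r` and `s` would be the return word read at the same
occurrence of `w`. -/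
theorem ne_sandwich (h : IsBlockFactorization u r s e) (hr : r ∈ ReturnWords u w)
    (hs : s ∈ ReturnWords u w) (b : ℕ) : r ≠ sandwich r s (e (b + 1)) := by
  intro heq
  have hlen := congrArg List.length heq
  rw [length_sandwich] at hlen
  have hmem (c : ℕ) : OccAt u w (cut r.length s.length e c 0) :=
    (h.occSet_eq hr hs).ge ⟨c, 0, Nat.zero_le _, rfl⟩
  have hrocc : OccAt u r (cut r.length s.length e b (e b)) := by
    simpa only [← heq] using h.occAt_sandwich b
  have hrgap := isGap_of_mem_returnWords hr hrocc <| by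
    have hw := hmem (b + 2)
    rwa [cut_add_two_zero, ← hlen] at hw
  have hsgap := isGap_of_mem_returnWords hs (h.occAt_right b) <| by
    rw [← cut_add_one_zero]
    exact hmem (b + 1)
  have := hrgap.right_unique hsgap
  have := length_pos_of_mem_returnWords hs
  omega

theorem iUnion_gapWords_eq (h : IsBlockFactorization u r s e)
    (hu : ∀ i, u i = v i + v (i + 1)) (hr : r ∈ ReturnWords u w) (hs : s ∈ ReturnWords u w)
    (hreven : Even (r.count 1)) (hsodd : ¬ Even (s.count 1)) :
    ⋃ c, gapWords u (occSet u w ∩ v ⁻¹' {c}) =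
      {z | (z = r ∧ ∃ b, 0 < e b) ∨ ∃ b, z = sandwich r s (e (b + 1))} := by
  have hlevel := h.occSet_inter_eq_levelCuts hu hr hs hreven hsodd
  rw [← (Equiv.addLeft (v 0)).surjective.iUnion_comp]
  ext z
  simp only [Equiv.coe_addLeft, hlevel, Set.mem_iUnion, Set.mem_ofPred_eq,
    h.mem_gapWords_levelCuts_iff (ne_nil_of_mem_returnWords hr)
      (ne_nil_of_mem_returnWords hs)]
  rw [exists_comm]
  simp only [exists_eq_left', exists_or, exists_and_left]

theorem iUnion_gapWords_eq_triple (h : IsBlockFactorization u r s e)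
    (hu : ∀ i, u i = v i + v (i + 1)) (hr : r ∈ ReturnWords u w) (hs : s ∈ ReturnWords u w)
    (hreven : Even (r.count 1)) (hsodd : ¬ Even (s.count 1)) (hper : ¬ IsEventuallyPeriodic u)
    {k : ℕ} (he : ∀ b, e b = k ∨ e b = k + 1) :
    ⋃ c, gapWords u (occSet u w ∩ v ⁻¹' {c}) = {r, sandwich r s (k + 1), sandwich r s k} := by
  obtain ⟨⟨c, hc⟩, b, hb⟩ := h.exists_apply_add_one_eq (ne_nil_of_mem_returnWords hs) hper he
  rw [h.iUnion_gapWords_eq hu hr hs hreven hsodd]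
  ext z
  simp only [Set.mem_ofPred_eq, Set.mem_insert_iff, Set.mem_singleton_iff]
  constructor
  · rintro (⟨rfl, -⟩ | ⟨b, rfl⟩)
    · exact .inl rfl
    · exact .inr ((he (b + 1)).symm.imp (fun h => by rw [h]) fun h => by rw [h])
  · rintro (rfl | rfl | rfl)
    exacts [.inl ⟨rfl, b + 1, by omega⟩, .inr ⟨b, by rw [hb]⟩, .inr ⟨c, by rw [hc]⟩]

end IsBlockFactorization

end Blocks

theorem rote_return_words_SU_general {u v : ℕ → ZMod 2} (hu : ∀ i, u i = v i + v (i + 1))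
    (hv : ∀ x, IsFactor v x → IsFactor v (Ex x)) (hper : ¬ IsEventuallyPeriodic u)
    {a : ZMod 2} {y r s : Word} {k : ℕ} (hr : r ∈ ReturnWords u (Sdiff (a :: y)))
    (hs : s ∈ ReturnWords u (Sdiff (a :: y))) (hreven : Even (r.count 1))
    (hsodd : ¬ Even (s.count 1))
    (hdec : ConcatOfBlocks u ((List.replicate k r).flatten ++ s)
      ((List.replicate (k + 1) r).flatten ++ s)) :
    ∃ A B C : Word, A ≠ B ∧ A ≠ C ∧ B ≠ C ∧ ReturnWords v (a :: y) = {A, B, C} ∧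
      Sdiff (A ++ [a]) = r ∧ Sdiff (B ++ [a]) = sandwich r s (k + 1) ∧
      Sdiff (C ++ [a]) = sandwich r s k := by
  obtain ⟨e, he, h⟩ := hdec.exists_isBlockFactorization
  obtain ⟨⟨c, hc⟩, b, hb⟩ := h.exists_apply_add_one_eq (ne_nil_of_mem_returnWords hs) hper he
  have himage : (fun R => Sdiff (R ++ [a])) '' ReturnWords v (a :: y) =
      {r, sandwich r s (k + 1), sandwich r s k} := by
    rw [image_returnWords_Sdiff_eq_iUnion hu hv,
      h.iUnion_gapWords_eq_triple hu hr hs hreven hsodd hper he]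
  obtain ⟨A, -, hA⟩ := himage.ge (.inl rfl)
  obtain ⟨B, -, hB⟩ := himage.ge (.inr (.inl rfl))
  obtain ⟨C, -, hC⟩ := himage.ge (.inr (.inr rfl))
  refine ⟨A, B, C, ?_, ?_, ?_, ?_, hA, hB, hC⟩
  · rintro rfl
    exact h.ne_sandwich hr hs b (hb ▸ hA.symm.trans hB)
  · rintro rfl
    exact h.ne_sandwich hr hs c (hc ▸ hA.symm.trans hC)
  · rintro rfl
    exact (sandwich_injective (ne_nil_of_mem_returnWords hr) s).ne k.succ_ne_self
      (hB.symm.trans hC)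
  · refine (Sdiff_append_singleton_injective a).image_injective ?_
    simp only [himage, Set.image_insert_eq, Set.image_singleton, hA, hB, hC]

/-- type `SU(k)`: let `v` be a complementary symmetric Rote sequence
(starting with `0`) associated with a standard Sturmian sequence `u = S(v)`; let
`x` be the prefix of `v` of length `n+1` and `w = S(x)` the corresponding prefix of
`u`, with return words `r` (more frequent, stable) and `s` (unstable), `u` being a
concatenation of blocks `rᵏs` and `r^{k+1}s`. Then the three return words `A`, `B`,
`C` of `x` in `v` satisfy `S(A0) = r`, `S(B0) = s r^{k+1} s` and `S(C0) = s rᵏ s`. -/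
theorem rote_return_words_SU (v u : ℕ → ZMod 2)
    (hv0 : v 0 = 0) (hrote : IsCSRote v)
    (hu : ∀ i, u i = v i + v (i + 1)) (hstd : IsStandardSturmian u)
    (n : ℕ) (r s : Word) (k : ℕ) (hk : 1 ≤ k)
    (hrw : ReturnWords u (Sdiff (List.ofFn fun i : Fin (n + 1) => v i)) = {r, s})
    (hrstable : Even (r.count 1)) (hsunstable : ¬ Even (s.count 1))
    (hdec : ConcatOfBlocks u ((List.replicate k r).flatten ++ s)
        ((List.replicate (k + 1) r).flatten ++ s)) :
    ∃ A B C : Word, A ≠ B ∧ A ≠ C ∧ B ≠ C ∧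
      ReturnWords v (List.ofFn fun i : Fin (n + 1) => v i) = {A, B, C} ∧
      Sdiff (A ++ [0]) = r ∧
      Sdiff (B ++ [0]) = s ++ (List.replicate (k + 1) r).flatten ++ s ∧
      Sdiff (C ++ [0]) = s ++ (List.replicate k r).flatten ++ s := by
  have hx : (List.ofFn fun i : Fin (n + 1) => v i) =
      0 :: List.ofFn fun i : Fin n => v (i + 1) := by simp [List.ofFn_succ, hv0]
  rw [hx] at hrw ⊢
  exact rote_return_words_SU_general hu hrote.2 hstd.not_isEventuallyPeriodic
    (hrw.ge (.inl rfl)) (hrw.ge (.inr rfl)) hrstable hsunstable hdec
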